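/- arXiv:2404.12568 — 2 statements merged into one kernel-verified Lean document; each statement's English description precedes it below -/
import Mathlib

section
/- Let W ∈ ℝ^{n×p} satisfy WᵀW = I_p, let B' ∈ ℝ^{p×p} and r' ∈ ℝ^p, and set B = W B' Wᵀ and r = W r'. Then: (a) if z ∈ ℝ^p satisfies B'z = −r', then w = Wz satisfies Bw = −r; (b) for every j ∈ ℕ and every z ∈ K_j(B', r'), the vector w = Wz lies in K_j(B, r) and ‖Bw + r‖ = ‖B'z + r'‖; consequently min_{w ∈ K_j(B, r)} ‖Bw + r‖ = min_{z ∈ K_j(B', r')} ‖B'z + r'‖, i.e., the j-th MINRES residual norms (zero initial guesses) for the systems Bw = −r and B'z = −r' coincide for all j. -/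
open Matrix

noncomputable def vnorm {ι : Type*} [Fintype ι] (x : ι → ℝ) : ℝ :=
  Real.sqrt (∑ i, x i ^ 2)

noncomputable def Krylov {ι : Type*} [Fintype ι] [DecidableEq ι]
    (B : Matrix ι ι ℝ) (r : ι → ℝ) (j : ℕ) : Submodule ℝ (ι → ℝ) :=
  Submodule.span ℝ {x | ∃ i < j, x = (B ^ i) *ᵥ r}

/-!
`WᵀW = I` and `B = W B' Wᵀ` give the intertwining relation `B W = W B'`. Hence `Bⁱ W r' = W B'ⁱ r'`,
so `W` maps `K_j(B', r')` onto `K_j(B, W r')`, and the residual at `W z` is `W` applied to the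
residual at `z`. As `W` is an isometry, both minimisations run over the same set of residual norms.
-/

section Orthonormal

variable {ι κ : Type*} [Fintype ι] [Fintype κ]

theorem vnorm_eq_sqrt_dotProduct (x : ι → ℝ) : vnorm x = √(x ⬝ᵥ x) := by
  simp only [vnorm, dotProduct, sq]

theorem mulVec_dotProduct_mulVec_of_transpose_mul_self {R : Type*} [CommSemiring R]
    [DecidableEq κ] {W : Matrix ι κ R} (hW : Wᵀ * W = 1) (x y : κ → R) :
    (W *ᵥ x) ⬝ᵥ (W *ᵥ y) = x ⬝ᵥ y := by
  rw [dotProduct_mulVec, ← mulVec_transpose, mulVec_mulVec, hW, one_mulVec]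

theorem vnorm_mulVec_of_transpose_mul_self [DecidableEq κ] {W : Matrix ι κ ℝ}
    (hW : Wᵀ * W = 1) (x : κ → ℝ) : vnorm (W *ᵥ x) = vnorm x := by
  simp only [vnorm_eq_sqrt_dotProduct, mulVec_dotProduct_mulVec_of_transpose_mul_self hW]

end Orthonormal

section Intertwining

variable {R ι κ : Type*} [Fintype ι] [Fintype κ]

theorem mulVec_mulVec_add_of_intertwining [NonUnitalSemiring R] {B : Matrix ι ι R}
    {B' : Matrix κ κ R} {W : Matrix ι κ R} (hBW : B * W = W * B') (z r' : κ → R) :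
    B *ᵥ (W *ᵥ z) + W *ᵥ r' = W *ᵥ (B' *ᵥ z + r') := by
  rw [mulVec_mulVec, hBW, ← mulVec_mulVec, mulVec_add]

theorem pow_mul_eq_mul_pow_of_intertwining [Semiring R] [DecidableEq ι] [DecidableEq κ]
    {B : Matrix ι ι R} {B' : Matrix κ κ R} {W : Matrix ι κ R} (hBW : B * W = W * B') (i : ℕ) :
    B ^ i * W = W * B' ^ i := by
  induction i with
  | zero => rw [pow_zero, pow_zero, Matrix.one_mul, Matrix.mul_one]
  | succ i ih =>
    calc B ^ (i + 1) * W = B ^ i * W * B' := by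
          rw [pow_succ, Matrix.mul_assoc, hBW, Matrix.mul_assoc]
      _ = W * B' ^ (i + 1) := by rw [ih, pow_succ, Matrix.mul_assoc]

end Intertwining

section Krylov

variable {ι κ : Type*} [Fintype ι] [Fintype κ] [DecidableEq κ]
  {B : Matrix ι ι ℝ} {B' : Matrix κ κ ℝ} {W : Matrix ι κ ℝ}

theorem Krylov_eq_span_image (B : Matrix κ κ ℝ) (r : κ → ℝ) (j : ℕ) :
    Krylov B r j = Submodule.span ℝ ((fun i => B ^ i *ᵥ r) '' Set.Iio j) := by
  simp only [Krylov, Set.image, Set.mem_Iio, eq_comm]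

theorem Krylov_mulVec_of_intertwining [DecidableEq ι] (hBW : B * W = W * B') (r' : κ → ℝ)
    (j : ℕ) : Krylov B (W *ᵥ r') j = (Krylov B' r' j).map W.mulVecLin := by
  simp only [Krylov_eq_span_image, Submodule.map_span, Set.image_image, mulVecLin_apply,
    mulVec_mulVec, pow_mul_eq_mul_pow_of_intertwining hBW]

theorem vnorm_residual_mulVec_of_intertwining (hW : Wᵀ * W = 1) (hBW : B * W = W * B')
    (r' z : κ → ℝ) : vnorm (B *ᵥ (W *ᵥ z) + W *ᵥ r') = vnorm (B' *ᵥ z + r') := by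
  rw [mulVec_mulVec_add_of_intertwining hBW, vnorm_mulVec_of_transpose_mul_self hW]

theorem image_vnorm_residual_Krylov_of_intertwining [DecidableEq ι] (hW : Wᵀ * W = 1)
    (hBW : B * W = W * B') (r' : κ → ℝ) (j : ℕ) :
    (fun w => vnorm (B *ᵥ w + W *ᵥ r')) '' (Krylov B (W *ᵥ r') j : Set (ι → ℝ)) =
      (fun z => vnorm (B' *ᵥ z + r')) '' (Krylov B' r' j : Set (κ → ℝ)) := by
  simp only [Krylov_mulVec_of_intertwining hBW, Submodule.map_coe, Set.image_image,
    mulVecLin_apply, vnorm_residual_mulVec_of_intertwining hW hBW]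

end Krylov

theorem minres_residuals_coincide_general {ι κ : Type*} [Fintype ι] [DecidableEq ι]
    [Fintype κ] [DecidableEq κ] {W : Matrix ι κ ℝ} (hW : Wᵀ * W = 1)
    {B : Matrix ι ι ℝ} {B' : Matrix κ κ ℝ} (hBW : B * W = W * B')
    {r : ι → ℝ} {r' : κ → ℝ} (hr : r = W *ᵥ r') :
    (∀ z : κ → ℝ, B' *ᵥ z = -r' → B *ᵥ (W *ᵥ z) = -r) ∧
    (∀ j : ℕ, ∀ z ∈ Krylov B' r' j,
      W *ᵥ z ∈ Krylov B r j ∧ vnorm (B *ᵥ (W *ᵥ z) + r) = vnorm (B' *ᵥ z + r')) ∧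
    (∀ j : ℕ,
      sInf ((fun w => vnorm (B *ᵥ w + r)) '' (Krylov B r j : Set (ι → ℝ))) =
        sInf ((fun z => vnorm (B' *ᵥ z + r')) '' (Krylov B' r' j : Set (κ → ℝ)))) := by
  subst hr
  refine ⟨fun z hz => ?_, fun j z hz => ⟨?_, ?_⟩, fun j => ?_⟩
  · rw [eq_neg_iff_add_eq_zero, mulVec_mulVec_add_of_intertwining hBW, hz, neg_add_cancel,
      mulVec_zero]
  · exact Krylov_mulVec_of_intertwining hBW r' j ▸ Submodule.mem_map_of_mem hz
  · exact vnorm_residual_mulVec_of_intertwining hW hBW r' z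
  · rw [image_vnorm_residual_Krylov_of_intertwining hW hBW]

/-- With `WᵀW = I`, `B = W B' Wᵀ`, `r = W r'`:
(a) solutions transfer; (b) `w = Wz` preserves membership in Krylov subspaces and residual
norms; consequently the `j`-th MINRES residual norms (zero initial guesses) for `Bw = -r`
and `B'z = -r'` coincide for all `j`. -/
theorem minres_residuals_coincide {n p : ℕ}
    (W : Matrix (Fin n) (Fin p) ℝ) (hW : Wᵀ * W = 1)
    (B' : Matrix (Fin p) (Fin p) ℝ) (r' : Fin p → ℝ)
    (B : Matrix (Fin n) (Fin n) ℝ) (hB : B = W * B' * Wᵀ)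
    (r : Fin n → ℝ) (hr : r = W *ᵥ r') :
    (∀ z : Fin p → ℝ, B' *ᵥ z = -r' → B *ᵥ (W *ᵥ z) = -r) ∧
    (∀ j : ℕ, ∀ z ∈ Krylov B' r' j,
      W *ᵥ z ∈ Krylov B r j ∧ vnorm (B *ᵥ (W *ᵥ z) + r) = vnorm (B' *ᵥ z + r')) ∧
    (∀ j : ℕ,
      sInf ((fun w => vnorm (B *ᵥ w + r)) '' (Krylov B r j : Set (Fin n → ℝ))) =
        sInf ((fun z => vnorm (B' *ᵥ z + r')) '' (Krylov B' r' j : Set (Fin p → ℝ)))) := by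
  have hBW : B * W = W * B' := by rw [hB, Matrix.mul_assoc, hW, Matrix.mul_one]
  exact minres_residuals_coincide_general hW hBW hr
end

section
/- Assume τ > (σ_max + σ_max,2)/2 and let r ∈ ℝ^{M+N} satisfy Π r = r. Then σ₁ = σ_max, and for every j ∈ ℕ there exists w ∈ K_j(B₁, r) such that ‖B₁ w + r‖ ≤ 2 · (1 − 2/(1 + √((τ + σ_max,2)/(τ − σ_max,2))))^j · ‖r‖; that is, the j-th MINRES residual for the JDSVD correction equation B₁ w = −r (with exact singular vectors u₁, v₁) satisfies this bound. -/
open Matrix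

/-!
Let `G` be the Jordan–Wielandt matrix `[[0, A], [Aᵀ, 0]]`, so that `B₁ = P (G - τ) P` with `P` the
deflating projection. On the range of `P`, a polynomial in `B₁` acts as the polynomial shifted by
`τ` in `H = P G P`, and `‖H‖ ≤ σ_max,2` because deflation replaces the first singular value by `0`.
A MINRES residual is at most `‖q(H) r‖` for any polynomial `q` of degree at most `j` with
`q(τ) = 1`; the Chebyshev polynomial scaled to `[-σ_max,2, σ_max,2]` gives the bound. Moreover
`σ_max,2 < τ`, and below `τ` closer means larger, whence `σ₁ = σ_max`.
-/

section Chebyshev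

open Polynomial

lemma inv_pow_le_two_mul_eval_chebyshev_T {ρ : ℝ} (hρ : 0 < ρ) (j : ℕ) :
    (ρ ^ j)⁻¹ ≤ 2 * (Chebyshev.T ℝ j).eval ((ρ + ρ⁻¹) / 2) := by
  have hT := dickson_one_one_eval_add_inv ρ ρ⁻¹ (mul_inv_cancel₀ hρ.ne') j
  rw [dickson_one_one_eq_chebyshev_T] at hT
  simp only [eval_mul, eval_ofNat, eval_comp, eval_C, eval_X, invOf_eq_inv] at hT
  rw [div_eq_inv_mul, hT, inv_pow]
  exact le_add_of_nonneg_left (by positivity)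

/-- The convergence factor of MINRES for a shifted symmetric operator `H - τ` with `‖H‖ ≤ a < τ`;
here `(τ + a) / (τ - a)` bounds the condition number of `H - τ`. -/
noncomputable def minresFactor (a τ : ℝ) : ℝ :=
  1 - 2 / (1 + √((τ + a) / (τ - a)))

lemma minresFactor_zero {τ : ℝ} (hτ : τ ≠ 0) : minresFactor 0 τ = 0 := by
  norm_num [minresFactor, hτ]

lemma one_lt_sqrt_add_div_sub {a τ : ℝ} (ha : 0 < a) (haτ : a < τ) :
    1 < √((τ + a) / (τ - a)) := by
  rw [Real.lt_sqrt zero_le_one, one_pow, one_lt_div (sub_pos.2 haτ)]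
  linarith

lemma minresFactor_pos {a τ : ℝ} (ha : 0 < a) (haτ : a < τ) : 0 < minresFactor a τ := by
  have hs := one_lt_sqrt_add_div_sub ha haτ
  rw [minresFactor, sub_pos, div_lt_one (by linarith)]
  linarith

lemma minresFactor_add_inv_div_two {a τ : ℝ} (ha : 0 < a) (haτ : a < τ) :
    (minresFactor a τ + (minresFactor a τ)⁻¹) / 2 = τ / a := by
  have hs := one_lt_sqrt_add_div_sub ha haτ
  have hs_sq : √((τ + a) / (τ - a)) ^ 2 * (τ - a) = τ + a := by
    rw [Real.sq_sqrt (div_nonneg (by linarith) (by linarith)), div_mul_cancel₀ _ (by linarith)]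
  rw [minresFactor]
  generalize √((τ + a) / (τ - a)) = s at hs hs_sq
  have hfactor : 1 - 2 / (1 + s) = (s - 1) / (s + 1) := by
    field_simp
    ring
  have : s - 1 ≠ 0 := by linarith
  have : s + 1 ≠ 0 := by linarith
  rw [hfactor]
  field_simp
  linear_combination -2 * hs_sq

lemma exists_polynomial_abs_eval_le_minresFactor_pow {a τ : ℝ} (ha : 0 ≤ a) (haτ : a < τ) (j : ℕ) :
    ∃ q : ℝ[X], q.natDegree ≤ j ∧ q.eval τ = 1 ∧
      ∀ x, |x| ≤ a → |q.eval x| ≤ 2 * minresFactor a τ ^ j := by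
  rcases ha.eq_or_lt with rfl | ha
  · refine ⟨(C τ⁻¹ * X) ^ j, by compute_degree, by simp [haτ.ne'], fun x hx => ?_⟩
    obtain rfl : x = 0 := by simpa using hx
    rw [minresFactor_zero haτ.ne']
    simp only [eval_pow, eval_mul, eval_C, eval_X, mul_zero, abs_pow, abs_zero]
    linarith [pow_nonneg le_rfl (a := (0 : ℝ)) j]
  · have hρ := minresFactor_pos ha haτ
    set t := (Chebyshev.T ℝ j).eval (τ / a) with ht
    have ht_ge : (minresFactor a τ ^ j)⁻¹ ≤ 2 * t := by
      rw [ht, ← minresFactor_add_inv_div_two ha haτ]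
      exact inv_pow_le_two_mul_eval_chebyshev_T hρ j
    have ht_pos : 0 < t := by linarith [inv_pos.2 (pow_pos hρ j)]
    refine ⟨C t⁻¹ * (Chebyshev.T ℝ j).comp (C a⁻¹ * X), ?_, ?_, fun x hx => ?_⟩
    · calc (C t⁻¹ * (Chebyshev.T ℝ j).comp (C a⁻¹ * X)).natDegree
          ≤ (Chebyshev.T ℝ j).natDegree * (C a⁻¹ * X : ℝ[X]).natDegree :=
            (natDegree_C_mul_le _ _).trans natDegree_comp_le
        _ ≤ j := by simp [ha.ne']
    · simp [← div_eq_inv_mul, ← ht, ht_pos.ne']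
    · have hT : |(Chebyshev.T ℝ j).eval (a⁻¹ * x)| ≤ 1 := by
        apply Chebyshev.abs_eval_T_real_le_one
        rwa [inv_mul_eq_div, abs_div, abs_of_pos ha, div_le_one ha]
      calc |(C t⁻¹ * (Chebyshev.T ℝ j).comp (C a⁻¹ * X)).eval x|
          = t⁻¹ * |(Chebyshev.T ℝ j).eval (a⁻¹ * x)| := by simp [abs_mul, abs_of_pos ht_pos]
        _ ≤ t⁻¹ := mul_le_of_le_one_right (inv_pos.2 ht_pos).le hT
        _ ≤ 2 * minresFactor a τ ^ j := by
          rw [inv_le_comm₀ (pow_pos hρ j) (by linarith), mul_inv] at ht_ge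
          linarith

end Chebyshev

section Compression

open Polynomial

lemma semiconjBy_aeval {R A : Type*} [CommSemiring R] [Semiring A] [Algebra R A] {a x y : A}
    (h : SemiconjBy a x y) (p : R[X]) : SemiconjBy a (aeval x p) (aeval y p) := by
  induction p using Polynomial.induction_on' with
  | add p q hp hq => simpa only [map_add] using hp.add_right hq
  | monomial n c =>
    have hc : SemiconjBy a (algebraMap R A c) (algebraMap R A c) := (Algebra.commutes c a).symm
    simpa only [aeval_monomial] using hc.mul_right (h.pow_right n)

variable {A : Type*} [NormedRing A] [StarRing A] [NormedAlgebra ℝ A]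
  [IsometricContinuousFunctionalCalculus ℝ A IsSelfAdjoint]

lemma norm_aeval_le_of_isSelfAdjoint {a : A} (ha : IsSelfAdjoint a) {p : ℝ[X]} {c : ℝ}
    (hp : ∀ x, |x| ≤ ‖a‖ → |p.eval x| ≤ c) : ‖aeval a p‖ ≤ c := by
  rw [← cfc_polynomial p a]
  exact norm_cfc_le ((abs_nonneg _).trans (hp 0 (by simp)))
    fun x hx => hp x (IsometricContinuousFunctionalCalculus.norm_spectrum_le a hx)

lemma exists_polynomial_norm_aeval_compression_mul_le [CStarRing A] {g e : A}
    (hg : IsSelfAdjoint g) (he : IsStarProjection e) {a τ : ℝ} (ha : ‖e * g * e‖ ≤ a)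
    (haτ : a < τ) (j : ℕ) :
    ∃ p : ℝ[X], p.natDegree ≤ j ∧ p.eval 0 = 1 ∧
      ‖aeval (e * (g - algebraMap ℝ A τ) * e) p * e‖ ≤ 2 * minresFactor a τ ^ j := by
  obtain ⟨q, hq_deg, hq_one, hq_le⟩ :=
    exists_polynomial_abs_eval_le_minresFactor_pow ((norm_nonneg _).trans ha) haτ j
  refine ⟨q.comp (X + C τ), by simpa [natDegree_comp] using hq_deg, by simp [hq_one], ?_⟩
  have hee : e * e = e := he.isIdempotentElem
  -- Multiplying by `e` discards the eigenvalue `0` of the compressed shift on the range of `1 - e`.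
  have hsemi : SemiconjBy e (e * g * e) (e * (g - algebraMap ℝ A τ) * e + algebraMap ℝ A τ) := by
    have hcomm : algebraMap ℝ A τ * e = e * algebraMap ℝ A τ := Algebra.commutes τ e
    simp only [SemiconjBy, mul_sub, sub_mul, add_mul, mul_assoc, hcomm, hee]
    simp only [← mul_assoc, hee, sub_add_cancel]
  have hq_norm : ‖aeval (e * g * e) q‖ ≤ 2 * minresFactor a τ ^ j :=
    norm_aeval_le_of_isSelfAdjoint (hg.conjugate_self he.isSelfAdjoint)
      fun x hx => hq_le x (hx.trans ha)
  calc ‖aeval (e * (g - algebraMap ℝ A τ) * e) (q.comp (X + C τ)) * e‖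
      = ‖e * aeval (e * g * e) q‖ := by
        rw [(semiconjBy_aeval hsemi q).eq, aeval_comp, map_add, aeval_X, aeval_C]
    _ ≤ ‖e‖ * ‖aeval (e * g * e) q‖ := norm_mul_le _ _
    _ ≤ ‖aeval (e * g * e) q‖ := mul_le_of_le_one_left (norm_nonneg _) he.norm_le
    _ ≤ 2 * minresFactor a τ ^ j := hq_norm

end Compression

section Krylov

open Polynomial
open scoped Matrix.Norms.L2Operator

variable {ι : Type*} [Fintype ι] [DecidableEq ι]

lemma exists_mem_krylov_mulVec_add_eq_aeval_mulVec (B : Matrix ι ι ℝ) (r : ι → ℝ) {j : ℕ}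
    {p : ℝ[X]} (hp : p.natDegree ≤ j) (hp_zero : p.eval 0 = 1) :
    ∃ w ∈ Krylov B r j, B *ᵥ w + r = aeval B p *ᵥ r := by
  refine ⟨aeval B p.divX *ᵥ r, ?_, ?_⟩
  · rw [aeval_eq_sum_range, Matrix.sum_mulVec]
    refine Submodule.sum_mem _ fun i _ => ?_
    rw [Matrix.smul_mulVec]
    by_cases hij : i < j
    · exact Submodule.smul_mem _ _ (Submodule.subset_span ⟨i, hij, rfl⟩)
    · have hcoeff : p.divX.coeff i = 0 := by
        rw [coeff_divX]
        exact coeff_eq_zero_of_natDegree_lt (by omega)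
      simp [hcoeff]
  · conv_rhs => rw [← X_mul_divX_add p, coeff_zero_eq_eval_zero, hp_zero]
    simp [Matrix.add_mulVec]

lemma vnorm_eq_norm_toLp {ι : Type*} [Fintype ι] (x : ι → ℝ) : vnorm x = ‖WithLp.toLp 2 x‖ := by
  simp [vnorm, EuclideanSpace.norm_eq]

lemma vnorm_mulVec_le (B : Matrix ι ι ℝ) (x : ι → ℝ) : vnorm (B *ᵥ x) ≤ ‖B‖ * vnorm x := by
  simpa only [vnorm_eq_norm_toLp] using! B.l2_opNorm_mulVec (WithLp.toLp 2 x)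

lemma exists_mem_krylov_compression_vnorm_le {G P : Matrix ι ι ℝ} (hG : G.IsHermitian)
    (hP : IsStarProjection P) {a τ : ℝ} (ha : ‖P * G * P‖ ≤ a) (haτ : a < τ) {r : ι → ℝ}
    (hr : P *ᵥ r = r) (j : ℕ) :
    ∃ w ∈ Krylov (P * (G - algebraMap ℝ _ τ) * P) r j,
      vnorm ((P * (G - algebraMap ℝ _ τ) * P) *ᵥ w + r) ≤ 2 * minresFactor a τ ^ j * vnorm r := by
  obtain ⟨p, hp_deg, hp_zero, hp_norm⟩ :=
    exists_polynomial_norm_aeval_compression_mul_le hG.isSelfAdjoint hP ha haτ j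
  obtain ⟨w, hw, hw_eq⟩ := exists_mem_krylov_mulVec_add_eq_aeval_mulVec
    (P * (G - algebraMap ℝ _ τ) * P) r hp_deg hp_zero
  refine ⟨w, hw, ?_⟩
  rw [hw_eq, ← hr, mulVec_mulVec, hr]
  exact (vnorm_mulVec_le _ r).trans (by gcongr; exact Real.sqrt_nonneg _)

end Krylov

section Deflation

variable {m n ι R : Type*} [DecidableEq m] [DecidableEq n] [DecidableEq ι] [Ring R] [StarRing R]

/-- The matrix `I - u u*`: for a unit vector `u`, the orthogonal projection onto the
complement of `u`. -/
def deflator (u : m → R) : Matrix m m R :=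
  1 - vecMulVec u (star u)

lemma conjTranspose_deflator (u : m → R) : (deflator u)ᴴ = deflator u := by
  simp [deflator, conjTranspose_vecMulVec]

variable [Fintype m] [Fintype n] [Fintype ι]

lemma isStarProjection_deflator {u : m → R} (hu : star u ⬝ᵥ u = 1) :
    IsStarProjection (deflator u) := by
  have hidem : IsIdempotentElem (vecMulVec u (star u)) := by
    simp [IsIdempotentElem, vecMulVec_mul_vecMulVec, hu]
  exact ⟨hidem.one_sub, conjTranspose_deflator u⟩

lemma deflator_mulVec_mul {W : Matrix m ι R} (hW : Wᴴ * W = 1) (x : ι → R) :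
    deflator (W *ᵥ x) * W = W * deflator x := by
  rw [deflator, deflator, Matrix.sub_mul, Matrix.mul_sub, Matrix.one_mul, Matrix.mul_one,
    vecMulVec_mul, star_mulVec, vecMul_vecMul, hW, vecMul_one, mul_vecMulVec]

lemma conjTranspose_mul_deflator_mulVec {W : Matrix m ι R} (hW : Wᴴ * W = 1) (x : ι → R) :
    Wᴴ * deflator (W *ᵥ x) = deflator x * Wᴴ := by
  simpa only [conjTranspose_mul, conjTranspose_deflator] using
    congr_arg conjTranspose (deflator_mulVec_mul hW x)

lemma deflator_single_mul_diagonal_mul_deflator_single (σ : ι → R) (k : ι) :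
    deflator (Pi.single k 1) * diagonal σ * deflator (Pi.single k 1) =
      diagonal (Function.update σ k 0) := by
  have hmask : deflator (Pi.single k 1 : ι → R) = diagonal (Function.update (1 : ι → R) k 0) := by
    ext i j
    by_cases hi : i = k <;> by_cases hj : j = k <;> by_cases hij : i = j <;>
      simp_all [deflator, vecMulVec_apply, one_apply]
  rw [hmask, diagonal_mul_diagonal, diagonal_mul_diagonal]
  congr 1 with i
  obtain rfl | hi := eq_or_ne i k <;> simp [*]

lemma deflator_mul_svd_mul_deflator {W : Matrix m ι R} {V : Matrix n ι R}
    (hW : Wᴴ * W = 1) (hV : Vᴴ * V = 1) (σ : ι → R) (k : ι) :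
    deflator (W.col k) * (W * diagonal σ * Vᴴ) * deflator (V.col k) =
      W * diagonal (Function.update σ k 0) * Vᴴ := by
  rw [← mulVec_single_one W k, ← mulVec_single_one V k]
  calc deflator (W *ᵥ Pi.single k 1) * (W * diagonal σ * Vᴴ) * deflator (V *ᵥ Pi.single k 1)
      = deflator (W *ᵥ Pi.single k 1) * W * diagonal σ * (Vᴴ * deflator (V *ᵥ Pi.single k 1)) := by
        simp only [Matrix.mul_assoc]
    _ = W * (deflator (Pi.single k 1) * diagonal σ * deflator (Pi.single k 1)) * Vᴴ := by
        rw [deflator_mulVec_mul hW, conjTranspose_mul_deflator_mulVec hV]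
        simp only [Matrix.mul_assoc]
    _ = W * diagonal (Function.update σ k 0) * Vᴴ := by
        rw [deflator_single_mul_diagonal_mul_deflator_single]

end Deflation

section OperatorNorm

open scoped Matrix.Norms.L2Operator

variable {m n ι 𝕜 : Type*} [Fintype m] [Fintype n] [Fintype ι] [DecidableEq ι] [RCLike 𝕜]

lemma norm_le_one_of_conjTranspose_mul_self_eq_one {W : Matrix m ι 𝕜} (hW : Wᴴ * W = 1) :
    ‖W‖ ≤ 1 := by
  have h_one : ‖(1 : Matrix ι ι 𝕜)‖ ≤ 1 := (IsStarProjection.one _).norm_le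
  rw [← hW, l2_opNorm_conjTranspose_mul_self] at h_one
  exact (le_abs_self _).trans (abs_le_one_iff_mul_self_le_one.2 h_one)

variable [DecidableEq m] [DecidableEq n]

lemma norm_deflator_mul_svd_mul_deflator_le {W : Matrix m ι 𝕜} {V : Matrix n ι 𝕜}
    (hW : Wᴴ * W = 1) (hV : Vᴴ * V = 1) {σ : ι → 𝕜} {k : ι} {a : ℝ} (ha : 0 ≤ a)
    (hσ : ∀ i ≠ k, ‖σ i‖ ≤ a) :
    ‖deflator (W.col k) * (W * diagonal σ * Vᴴ) * deflator (V.col k)‖ ≤ a := by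
  rw [deflator_mul_svd_mul_deflator hW hV]
  calc ‖W * diagonal (Function.update σ k 0) * Vᴴ‖
      ≤ ‖W‖ * ‖diagonal (Function.update σ k 0)‖ * ‖Vᴴ‖ :=
        (l2_opNorm_mul _ _).trans (by gcongr; exact l2_opNorm_mul _ _)
    _ ≤ 1 * a * 1 := by
        rw [l2_opNorm_diagonal, l2_opNorm_conjTranspose]
        gcongr
        · exact norm_le_one_of_conjTranspose_mul_self_eq_one hW
        · refine (pi_norm_le_iff_of_nonneg ha).2 fun i => ?_
          obtain rfl | hi := eq_or_ne i k <;> simp [*]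
        · exact norm_le_one_of_conjTranspose_mul_self_eq_one hV
    _ = a := by ring

end OperatorNorm

section Augmented

open scoped Matrix.Norms.L2Operator

variable {m n : Type*}

/-- The Jordan–Wielandt matrix of `A`, whose eigenpairs encode the singular triplets of `A`. -/
def jordanWielandt {R : Type*} [Zero R] [Star R] (A : Matrix m n R) : Matrix (m ⊕ n) (m ⊕ n) R :=
  fromBlocks 0 A Aᴴ 0

lemma isHermitian_jordanWielandt {R : Type*} [AddMonoid R] [StarAddMonoid R] (A : Matrix m n R) :
    (jordanWielandt A).IsHermitian :=
  isHermitian_zero.fromBlocks rfl isHermitian_zero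

lemma jordanWielandt_sub_smul_one {R : Type*} [Ring R] [StarRing R] [DecidableEq m]
    [DecidableEq n] (A : Matrix m n R) (τ : R) :
    jordanWielandt A - τ • 1 = fromBlocks ((-τ) • 1) A Aᴴ ((-τ) • 1) := by
  simp [jordanWielandt, ← fromBlocks_one, fromBlocks_smul, sub_eq_add_neg, fromBlocks_neg,
    fromBlocks_add]

variable [Fintype m] [Fintype n]

lemma fromBlocks_mul_jordanWielandt_mul_fromBlocks {R : Type*} [Semiring R] [StarRing R]
    (A : Matrix m n R) {P : Matrix m m R} {Q : Matrix n n R} (hP : P.IsHermitian)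
    (hQ : Q.IsHermitian) :
    fromBlocks P 0 0 Q * jordanWielandt A * fromBlocks P 0 0 Q = jordanWielandt (P * A * Q) := by
  simp [jordanWielandt, fromBlocks_multiply, conjTranspose_mul, hP.eq, hQ.eq, Matrix.mul_assoc]

lemma isStarProjection_fromBlocks {R : Type*} [Semiring R] [StarRing R]
    {P : Matrix m m R} {Q : Matrix n n R} (hP : IsStarProjection P) (hQ : IsStarProjection Q) :
    IsStarProjection (fromBlocks P 0 0 Q) where
  isIdempotentElem := by
    simp [IsIdempotentElem, fromBlocks_multiply, hP.isIdempotentElem.eq, hQ.isIdempotentElem.eq]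
  isSelfAdjoint := hP.isSelfAdjoint.isHermitian.fromBlocks conjTranspose_zero
    hQ.isSelfAdjoint.isHermitian

variable {𝕜 : Type*} [RCLike 𝕜]

lemma norm_toLp_sumElim_sq (y : m → 𝕜) (z : n → 𝕜) :
    ‖WithLp.toLp 2 (Sum.elim y z)‖ ^ 2 = ‖WithLp.toLp 2 y‖ ^ 2 + ‖WithLp.toLp 2 z‖ ^ 2 := by
  simp [EuclideanSpace.norm_sq_eq]

lemma norm_jordanWielandt_le [DecidableEq m] [DecidableEq n] (A : Matrix m n 𝕜) :
    ‖jordanWielandt A‖ ≤ ‖A‖ := by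
  refine ContinuousLinearMap.opNorm_le_bound _ (norm_nonneg _) fun x => ?_
  set y : m → 𝕜 := x.ofLp ∘ Sum.inl
  set z : n → 𝕜 := x.ofLp ∘ Sum.inr
  have hx : x = WithLp.toLp 2 (Sum.elim y z) := by simp [y, z, Sum.elim_comp_inl_inr]
  have hy : ‖WithLp.toLp 2 (Aᴴ *ᵥ y)‖ ≤ ‖A‖ * ‖WithLp.toLp 2 y‖ :=
    l2_opNorm_conjTranspose A ▸ l2_opNorm_mulVec Aᴴ (WithLp.toLp 2 y)
  have hz : ‖WithLp.toLp 2 (A *ᵥ z)‖ ≤ ‖A‖ * ‖WithLp.toLp 2 z‖ :=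
    l2_opNorm_mulVec A (WithLp.toLp 2 z)
  change ‖WithLp.toLp 2 (jordanWielandt A *ᵥ x.ofLp)‖ ≤ ‖A‖ * ‖x‖
  refine le_of_sq_le_sq ?_ (by positivity)
  calc ‖WithLp.toLp 2 (jordanWielandt A *ᵥ x.ofLp)‖ ^ 2
      = ‖WithLp.toLp 2 (A *ᵥ z)‖ ^ 2 + ‖WithLp.toLp 2 (Aᴴ *ᵥ y)‖ ^ 2 := by
        rw [jordanWielandt, fromBlocks_mulVec, norm_toLp_sumElim_sq]
        simp [y, z]
    _ ≤ (‖A‖ * ‖WithLp.toLp 2 z‖) ^ 2 + (‖A‖ * ‖WithLp.toLp 2 y‖) ^ 2 := by gcongr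
    _ = (‖A‖ * ‖x‖) ^ 2 := by
        rw [hx, mul_pow _ ‖WithLp.toLp 2 (Sum.elim y z)‖, norm_toLp_sumElim_sq]
        ring

end Augmented

section CorrectionEquation

variable {m n ι : Type*} [Fintype m] [DecidableEq m] [Fintype n] [DecidableEq n] [Fintype ι]
  [DecidableEq ι]

lemma exists_mem_krylov_correction_vnorm_le {W : Matrix m ι ℝ} {V : Matrix n ι ℝ}
    (hW : Wᴴ * W = 1) (hV : Vᴴ * V = 1) {σ : ι → ℝ} {k : ι} {a τ : ℝ} (ha : 0 ≤ a) (haτ : a < τ)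
    (hσ : ∀ i ≠ k, |σ i| ≤ a) {P B : Matrix (m ⊕ n) (m ⊕ n) ℝ}
    (hP : P = fromBlocks (deflator (W.col k)) 0 0 (deflator (V.col k)))
    (hB : B = jordanWielandt (W * diagonal σ * Vᴴ) - algebraMap ℝ _ τ)
    {r : m ⊕ n → ℝ} (hr : P *ᵥ r = r) (j : ℕ) :
    ∃ w ∈ Krylov (P * B * P) r j,
      vnorm ((P * B * P) *ᵥ w + r) ≤ 2 * minresFactor a τ ^ j * vnorm r := by
  open scoped Matrix.Norms.L2Operator in
  have hnorm : ‖P * jordanWielandt (W * diagonal σ * Vᴴ) * P‖ ≤ a := by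
    rw [hP, fromBlocks_mul_jordanWielandt_mul_fromBlocks _ (conjTranspose_deflator _)
      (conjTranspose_deflator _)]
    exact (norm_jordanWielandt_le _).trans (norm_deflator_mul_svd_mul_deflator_le hW hV ha hσ)
  have hW_unit : star (W.col k) ⬝ᵥ W.col k = 1 := (congr_fun₂ hW k k).trans (one_apply_eq k)
  have hV_unit : star (V.col k) ⬝ᵥ V.col k = 1 := (congr_fun₂ hV k k).trans (one_apply_eq k)
  have hP_proj : IsStarProjection P :=
    hP ▸ isStarProjection_fromBlocks (isStarProjection_deflator hW_unit)
      (isStarProjection_deflator hV_unit)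
  subst hB
  exact exists_mem_krylov_compression_vnorm_le (isHermitian_jordanWielandt _) hP_proj hnorm haτ hr j

end CorrectionEquation

section SingularValues

lemma submatrix_conjTranspose_mul_submatrix_eq_one {m n R : Type*} [Fintype m] [DecidableEq m]
    [DecidableEq n] [Semiring R] [StarRing R] {U : Matrix m m R} (hU : Uᴴ * U = 1)
    {f : n → m} (hf : f.Injective) : (U.submatrix id f)ᴴ * U.submatrix id f = 1 := by
  rw [conjTranspose_submatrix, ← submatrix_mul _ _ _ _ _ Function.bijective_id, hU,
    submatrix_one f hf]

lemma mul_eq_submatrix_mul_diagonal {l m n R : Type*} [Fintype m] [DecidableEq m] [Fintype n]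
    [DecidableEq n] [NonAssocSemiring R] (U : Matrix l m R) {S : Matrix m n R} {f : n → m}
    {σ : n → R} (hS : ∀ i j, S i j = if i = f j then σ j else 0) :
    U * S = U.submatrix id f * diagonal σ := by
  ext i j
  rw [mul_diagonal, mul_apply]
  simp [hS]

lemma eq_of_isGreatest_range_of_abs_sub_lt {ι α : Type*} [AddCommGroup α] [LinearOrder α]
    [IsOrderedAddMonoid α] {σ : ι → α} {i₀ : ι} {s τ : α} (hs : IsGreatest (Set.range σ) s)
    (hclosest : ∀ i ≠ i₀, |σ i₀ - τ| < |σ i - τ|) (hlt : ∀ i ≠ i₀, σ i < τ) : σ i₀ = s := by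
  obtain ⟨⟨i, rfl⟩, hmax⟩ := hs
  by_contra hne
  have hi : i ≠ i₀ := fun h => hne (h ▸ rfl)
  have hle : σ i₀ ≤ σ i := hmax ⟨i₀, rfl⟩
  have hlt_abs := hclosest i hi
  rw [abs_sub_comm, abs_sub_comm (σ i), abs_of_nonneg (sub_nonneg.2 (hle.trans (hlt i hi).le)),
    abs_of_pos (sub_pos.2 (hlt i hi)), sub_lt_sub_iff_left] at hlt_abs
  exact hlt_abs.not_ge hle

end SingularValues

/-- Theorem 3.3(i). MINRES bound for the JDSVD correction equation with
exact singular vectors, in the case `τ > (σ_max + σ_max,2)/2`. -/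
theorem minres_bound_exact_largest {M N : ℕ} (hN : 2 ≤ N) (hMN : N ≤ M)
    (A : Matrix (Fin M) (Fin N) ℝ)
    (U : Matrix (Fin M) (Fin M) ℝ) (V : Matrix (Fin N) (Fin N) ℝ)
    (hU : Uᵀ * U = 1) (hV : Vᵀ * V = 1)
    (σ : Fin N → ℝ) (hσ : ∀ i, 0 ≤ σ i)
    (S : Matrix (Fin M) (Fin N) ℝ)
    (hS : ∀ i j, S i j = if (i : ℕ) = (j : ℕ) then σ j else 0)
    (hA : A = U * S * Vᵀ)
    (τ : ℝ) (hτ0 : 0 ≤ τ)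
    (hclosest : ∀ i : Fin N, i ≠ ⟨0, by omega⟩ → |σ ⟨0, by omega⟩ - τ| < |σ i - τ|)
    (σmax σmax2 : ℝ)
    (hσmax : IsGreatest (Set.range σ) σmax)
    (hσmax2 : IsGreatest (σ '' {i : Fin N | i ≠ ⟨0, by omega⟩}) σmax2)
    (hτ : (σmax + σmax2) / 2 < τ)
    (u1 : Fin M → ℝ) (hu1 : u1 = fun i => U i ⟨0, by omega⟩)
    (v1 : Fin N → ℝ) (hv1 : v1 = fun i => V i ⟨0, by omega⟩)
    (B P B1 : Matrix (Fin M ⊕ Fin N) (Fin M ⊕ Fin N) ℝ)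
    (hB : B = Matrix.fromBlocks ((-τ) • 1) A Aᵀ ((-τ) • 1))
    (hP : P = Matrix.fromBlocks (1 - vecMulVec u1 u1) 0 0 (1 - vecMulVec v1 v1))
    (hB1 : B1 = P * B * P)
    (r : Fin M ⊕ Fin N → ℝ) (hr : P *ᵥ r = r) :
    σ ⟨0, by omega⟩ = σmax ∧
    ∀ j : ℕ, ∃ w ∈ Krylov B1 r j,
      vnorm (B1 *ᵥ w + r) ≤
        2 * (1 - 2 / (1 + Real.sqrt ((τ + σmax2) / (τ - σmax2)))) ^ j * vnorm r := by
  have ha : 0 ≤ σmax2 := by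
    obtain ⟨i, -, hi⟩ := hσmax2.1
    exact hi ▸ hσ i
  have hle : ∀ i ≠ ⟨0, by omega⟩, σ i ≤ σmax2 := fun i hi => hσmax2.2 ⟨i, hi, rfl⟩
  have haτ : σmax2 < τ := by
    obtain ⟨i, -, hi⟩ := hσmax2.1
    linarith [hσmax.2 ⟨i, hi⟩]
  refine ⟨eq_of_isGreatest_range_of_abs_sub_lt hσmax hclosest fun i hi => (hle i hi).trans_lt haτ,
    fun j => ?_⟩
  have hW : (U.submatrix id (Fin.castLE hMN))ᴴ * U.submatrix id (Fin.castLE hMN) = 1 :=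
    submatrix_conjTranspose_mul_submatrix_eq_one hU (Fin.castLE_injective hMN)
  have hA_thin : A = U.submatrix id (Fin.castLE hMN) * diagonal σ * Vᴴ := by
    rw [hA, mul_eq_submatrix_mul_diagonal U (f := Fin.castLE hMN)
      (by simpa [Fin.ext_iff] using hS)]
    rfl
  have hB_shift : B = jordanWielandt A - algebraMap ℝ _ τ := by
    rw [hB, Algebra.algebraMap_eq_smul_one, jordanWielandt_sub_smul_one,
      conjTranspose_eq_transpose_of_trivial]
  subst hB1
  exact exists_mem_krylov_correction_vnorm_le hW hV ha haτ
    (fun i hi => (abs_of_nonneg (hσ i)).trans_le (hle i hi)) (hP.trans (by subst hu1 hv1; rfl))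
    (hA_thin ▸ hB_shift) hr j
end
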